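/- For every θ > 0 there exists a constant c(θ) > 0, depending only on θ, such that for every integer n ≥ 1 and every mesh Δₙ with 0 < Δₙ ≤ min(1, 1/(2θ)), the centered quadratic sum D_{1,n} := (2θ/n) Σ_{k=0}^{n−1} ( X₁(kΔₙ)² − E[X₁(kΔₙ)²] ) satisfies E[ D_{1,n}² ] ≤ c(θ) · (nΔₙ)^{−1}. -/

import Mathlib

open MeasureTheory ProbabilityTheory Real Filter Finset
open scoped Topology ENNReal NNReal

noncomputable section

/-- Kolmogorov distance between two Borel measures on `ℝ`. -/
def dKol (μ ν : Measure ℝ) : ℝ :=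
  ⨆ z : ℝ, |(μ (Set.Iic z)).toReal - (ν (Set.Iic z)).toReal|

/-- `X 0, X 1 : ℝ → Ω → ℝ` is a pair of independent centered Gaussian processes,
started at `0`, with almost surely continuous paths on `[0,∞)` and the
Ornstein–Uhlenbeck covariance `E[Xᵢ(s)Xᵢ(t)] = (e^{−θ|t−s|} − e^{−θ(t+s)})/(2θ)`. -/
structure IsOUPair {Ω : Type} [MeasureSpace Ω] (θ : ℝ) (X : Fin 2 → ℝ → Ω → ℝ) : Prop where
  meas : ∀ i t, Measurable (X i t)
  gaussian : ∀ (i : Fin 2) (n : ℕ) (t : Fin n → ℝ) (c : Fin n → ℝ), (∀ j, 0 ≤ t j) →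
      ∃ v : NNReal, Measure.map (fun ω => ∑ j, c j * X i (t j) ω) ℙ = gaussianReal 0 v
  indep : IndepFun (fun ω t => X 0 t ω) (fun ω t => X 1 t ω) ℙ
  cont : ∀ᵐ ω ∂(ℙ : Measure Ω), ∀ i, ContinuousOn (fun t => X i t ω) (Set.Ici 0)
  init : ∀ i ω, X i 0 ω = 0
  cov : ∀ (i : Fin 2) (s t : ℝ), 0 ≤ s → 0 ≤ t →
      ∫ ω, X i s ω * X i t ω ∂ℙ
        = (Real.exp (-θ * |t - s|) - Real.exp (-θ * (t + s))) / (2 * θ)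

variable {Ω : Type} [MeasureSpace Ω]

/-- `F_T := T^{-1/2} ∫₀^T X₁(u) X₂(u) du`. -/
def ouF (X : Fin 2 → ℝ → Ω → ℝ) (T : ℝ) (ω : Ω) : ℝ :=
  (1 / Real.sqrt T) * ∫ u in (0:ℝ)..T, X 0 u ω * X 1 u ω

/-- `X̄ᵢ(T) := T^{-1} ∫₀^T Xᵢ(u) du`. -/
def ouXbar (X : Fin 2 → ℝ → Ω → ℝ) (i : Fin 2) (T : ℝ) (ω : Ω) : ℝ :=
  (1 / T) * ∫ u in (0:ℝ)..T, X i u ω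

/-- `Y_{ij}(T) := ∫₀^T Xᵢ(u)Xⱼ(u) du − T·X̄ᵢ(T)·X̄ⱼ(T)`. -/
def ouY (X : Fin 2 → ℝ → Ω → ℝ) (i j : Fin 2) (T : ℝ) (ω : Ω) : ℝ :=
  (∫ u in (0:ℝ)..T, X i u ω * X j u ω) - T * ouXbar X i T ω * ouXbar X j T ω

/-- Yule's nonsense correlation `ρ(T)`. -/
def ouRho (X : Fin 2 → ℝ → Ω → ℝ) (T : ℝ) (ω : Ω) : ℝ :=
  ouY X 0 1 T ω / Real.sqrt (ouY X 0 0 T ω * ouY X 1 1 T ω)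

/-- `A(n) := (√Tₙ/n) Σ_{k<n} X₁(kΔ)X₂(kΔ)` with `Tₙ = nΔ`. -/
def ouA (X : Fin 2 → ℝ → Ω → ℝ) (n : ℕ) (Δ : ℝ) (ω : Ω) : ℝ :=
  (Real.sqrt (n * Δ) / n) * ∑ k ∈ Finset.range n, X 0 (k * Δ) ω * X 1 (k * Δ) ω

/-- `X̃ᵢ(n) := n^{-1} Σ_{k<n} Xᵢ(kΔ)`. -/
def ouXtilde (X : Fin 2 → ℝ → Ω → ℝ) (i : Fin 2) (n : ℕ) (Δ : ℝ) (ω : Ω) : ℝ :=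
  (1 / n) * ∑ k ∈ Finset.range n, X i (k * Δ) ω

/-- `Ỹ_{ij}(n) := Δ Σ_{k<n} Xᵢ(kΔ)Xⱼ(kΔ) − Tₙ·X̃ᵢ(n)·X̃ⱼ(n)` with `Tₙ = nΔ`. -/
def ouYtilde (X : Fin 2 → ℝ → Ω → ℝ) (i j : Fin 2) (n : ℕ) (Δ : ℝ) (ω : Ω) : ℝ :=
  Δ * ∑ k ∈ Finset.range n, X i (k * Δ) ω * X j (k * Δ) ω
    - (n * Δ) * ouXtilde X i n Δ ω * ouXtilde X j n Δ ω

/-- Yule's discrete nonsense correlation `ρ̃(n)`. -/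
def ouRhoTilde (X : Fin 2 → ℝ → Ω → ℝ) (n : ℕ) (Δ : ℝ) (ω : Ω) : ℝ :=
  ouYtilde X 0 1 n Δ ω / Real.sqrt (ouYtilde X 0 0 n Δ ω * ouYtilde X 1 1 n Δ ω)

/-!
For centred jointly Gaussian `U`, `V` one has `cov(U², V²) = 2 cov(U, V)²`: polarization reduces
the mixed moment `E[U² V²]` to fourth moments of `U`, `V`, `U + V` and `U - V`. Hence `E[D²]` equals
`2 (2θ/n)² ∑ⱼ ∑ₖ cov(X(jΔ), X(kΔ))²`. Since `|cov(X(s), X(t))| ≤ e^{-θ|t-s|} / (2θ)`, each row of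
this double sum is, up to the factor `(2θ)⁻²`, bounded by a two-sided geometric sum of ratio
`e^{-2θΔ}`, hence by `(1 + e^{-2θΔ}) / (1 - e^{-2θΔ}) ≤ 1 + 1/(θΔ)`.
-/

section GaussianMoments

variable {Ω' : Type*} {mΩ' : MeasurableSpace Ω'} {P : Measure Ω'} {X Y : Ω' → ℝ}

lemma integral_pow_add_two_gaussianReal (v : ℝ≥0) (n : ℕ) :
    ∫ x, x ^ (n + 2) ∂(gaussianReal 0 v) = (n + 1) * v * ∫ x, x ^ n ∂(gaussianReal 0 v) := by
  have moment_eq (m : ℕ) : ∫ x, x ^ m ∂(gaussianReal 0 v)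
      = iteratedDeriv m (fun t : ℝ ↦ rexp (v * t ^ 2 / 2)) 0 := by
    simpa [mgf_id_gaussianReal] using (iteratedDeriv_mgf_zero (X := id) (μ := gaussianReal 0 v)
      (by simp [integrableExpSet_id_gaussianReal]) m).symm
  have deriv_mgf : deriv (fun t : ℝ ↦ rexp (v * t ^ 2 / 2))
      = fun t : ℝ ↦ v * (t * rexp (v * t ^ 2 / 2)) := by
    funext t
    have hquad : HasDerivAt (fun t : ℝ ↦ v * t ^ 2 / 2) (v * t) t := by
      convert! ((hasDerivAt_pow 2 t).const_mul (v : ℝ)).div_const 2 using 1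
      simp only [Nat.cast_ofNat, Nat.add_one_sub_one, pow_one]
      ring
    rw [hquad.exp.deriv]
    ring
  -- At `t = 0` only the `i = 1` term of the Leibniz rule for `t * rexp (v * t ^ 2 / 2)` survives.
  rw [moment_eq, moment_eq, iteratedDeriv_succ', deriv_mgf, iteratedDeriv_const_mul_field,
    iteratedDeriv_fun_mul contDiffAt_fun_id (by fun_prop), Finset.sum_eq_single 1]
  · simp only [Nat.choose_one_right, Nat.cast_add, Nat.cast_one, iteratedDeriv_fun_id_zero,
      ↓reduceIte, mul_one, add_tsub_cancel_right]
    ring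
  · intro i _ hi
    simp [iteratedDeriv_fun_id_zero, hi]
  · simp

lemma integrable_pow_of_hasGaussianLaw (hX : HasGaussianLaw X P) (n : ℕ) :
    Integrable (fun ω ↦ X ω ^ n) P := by
  have := hX.isProbabilityMeasure
  rw [← integrable_norm_iff (hX.aemeasurable.pow_const n).aestronglyMeasurable]
  simpa only [norm_pow] using (hX.memLp (ENNReal.natCast_ne_top n)).integrable_norm_pow'

lemma memLp_two_sq_of_hasGaussianLaw (hX : HasGaussianLaw X P) :
    MemLp (fun ω ↦ X ω ^ 2) 2 P := by
  rw [memLp_two_iff_integrable_sq (hX.aemeasurable.pow_const 2).aestronglyMeasurable]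
  simpa only [← pow_mul] using integrable_pow_of_hasGaussianLaw hX (2 * 2)

lemma integral_pow_four_of_hasGaussianLaw (hX : HasGaussianLaw X P) (hX0 : P[X] = 0) :
    ∫ ω, X ω ^ 4 ∂P = 3 * Var[X; P] ^ 2 := by
  have hmap : P.map X = gaussianReal 0 Var[X; P].toNNReal := hX0 ▸ hX.map_eq_gaussianReal
  calc ∫ ω, X ω ^ 4 ∂P
      = ∫ x, x ^ 4 ∂(gaussianReal 0 Var[X; P].toNNReal) := by
        rw [← hmap, integral_map hX.aemeasurable (by fun_prop)]
    _ = 3 * Var[X; P] ^ 2 := by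
        rw [integral_pow_add_two_gaussianReal, integral_pow_add_two_gaussianReal]
        simp only [Nat.cast_ofNat, coe_toNNReal', variance_nonneg, sup_of_le_left,
          CharP.cast_eq_zero, zero_add, one_mul, pow_zero, integral_const, probReal_univ,
          smul_eq_mul, mul_one]
        ring

lemma integral_sq_mul_sq_of_hasGaussianLaw (hXY : HasGaussianLaw (fun ω ↦ (X ω, Y ω)) P)
    (hX0 : P[X] = 0) (hY0 : P[Y] = 0) :
    ∫ ω, X ω ^ 2 * Y ω ^ 2 ∂P = Var[X; P] * Var[Y; P] + 2 * cov[X, Y; P] ^ 2 := by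
  have := hXY.isProbabilityMeasure
  have hX := hXY.fst
  have hY := hXY.snd
  have hadd0 : P[X + Y] = 0 := by simp [integral_add hX.integrable hY.integrable, hX0, hY0]
  have hsub0 : P[X - Y] = 0 := by simp [integral_sub hX.integrable hY.integrable, hX0, hY0]
  have hX4 := integrable_pow_of_hasGaussianLaw hX 4
  have hY4 := integrable_pow_of_hasGaussianLaw hY 4
  have hXY4 : Integrable (fun ω ↦ X ω ^ 2 * Y ω ^ 2) P :=
    (memLp_two_sq_of_hasGaussianLaw hX).integrable_mul (memLp_two_sq_of_hasGaussianLaw hY)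
  have polarization : ∫ ω, (X + Y) ω ^ 4 ∂P + ∫ ω, (X - Y) ω ^ 4 ∂P
      = 2 * ∫ ω, X ω ^ 4 ∂P + 12 * ∫ ω, X ω ^ 2 * Y ω ^ 2 ∂P + 2 * ∫ ω, Y ω ^ 4 ∂P := by
    rw [← integral_add (integrable_pow_of_hasGaussianLaw hXY.add 4)
        (integrable_pow_of_hasGaussianLaw hXY.sub 4),
      ← integral_const_mul, ← integral_const_mul, ← integral_const_mul,
      ← integral_add (hX4.const_mul 2) (hXY4.const_mul 12),
      ← integral_add ((hX4.const_mul 2).fun_add (hXY4.const_mul 12)) (hY4.const_mul 2)]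
    congr with ω
    simp only [Pi.add_apply, Pi.sub_apply]
    ring
  rw [integral_pow_four_of_hasGaussianLaw hXY.add hadd0,
    integral_pow_four_of_hasGaussianLaw hXY.sub hsub0,
    integral_pow_four_of_hasGaussianLaw hX hX0, integral_pow_four_of_hasGaussianLaw hY hY0,
    variance_add hX.memLp_two hY.memLp_two, variance_sub hX.memLp_two hY.memLp_two] at polarization
  linarith

lemma covariance_sq_sq_of_hasGaussianLaw (hXY : HasGaussianLaw (fun ω ↦ (X ω, Y ω)) P)
    (hX0 : P[X] = 0) (hY0 : P[Y] = 0) :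
    cov[fun ω ↦ X ω ^ 2, fun ω ↦ Y ω ^ 2; P] = 2 * cov[X, Y; P] ^ 2 := by
  have := hXY.isProbabilityMeasure
  rw [covariance_eq_sub (memLp_two_sq_of_hasGaussianLaw hXY.fst)
      (memLp_two_sq_of_hasGaussianLaw hXY.snd),
    ← variance_of_integral_eq_zero hXY.fst.aemeasurable hX0,
    ← variance_of_integral_eq_zero hXY.snd.aemeasurable hY0]
  simp only [Pi.mul_apply, integral_sq_mul_sq_of_hasGaussianLaw hXY hX0 hY0]
  ring

end GaussianMoments

section GaussianProcess

variable {Ω' T : Type*} {mΩ' : MeasurableSpace Ω'} {P : Measure Ω'}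

lemma isGaussianProcess_of_hasGaussianLaw_sum_mul {X : T → Ω' → ℝ}
    (hlin : ∀ (I : Finset T) (c : I → ℝ), HasGaussianLaw (fun ω ↦ ∑ i, c i * X i ω) P) :
    IsGaussianProcess X P where
  hasGaussianLaw I := by
    classical
    refine ⟨isGaussian_of_isGaussian_map fun L ↦ ?_⟩
    have hmeas : AEMeasurable (fun ω ↦ I.restrict (X · ω)) P :=
      aemeasurable_pi_lambda _ fun i : I ↦ by
        simpa using (hlin {(i : T)} fun _ ↦ 1).aemeasurable
    have hL (ω : Ω') : L (I.restrict (X · ω))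
        = ∑ i : I, L (fun j ↦ if i = j then 1 else 0) * X i ω := by
      rw [← L.coe_coe, LinearMap.pi_apply_eq_sum_univ]
      simp only [Finset.restrict, smul_eq_mul, mul_comm]
    rw [AEMeasurable.map_map_of_aemeasurable (by fun_prop) hmeas]
    simpa only [Function.comp_def, hL] using (hlin I _).isGaussian_map

lemma variance_sum_sq_of_isGaussianProcess {X : T → Ω' → ℝ} (hX : IsGaussianProcess X P)
    (hX0 : ∀ t, P[X t] = 0) (s : Finset T) :
    Var[fun ω ↦ ∑ i ∈ s, X i ω ^ 2; P] = 2 * ∑ i ∈ s, ∑ j ∈ s, cov[X i, X j; P] ^ 2 := by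
  have := hX.isProbabilityMeasure
  rw [variance_fun_sum' fun i _ ↦ memLp_two_sq_of_hasGaussianLaw (hX.hasGaussianLaw_eval i)]
  simp only [covariance_sq_sq_of_hasGaussianLaw hX.hasGaussianLaw_prodMk (hX0 _) (hX0 _),
    Finset.mul_sum]

end GaussianProcess

lemma sum_range_pow_natDist_le {r : ℝ} (hr0 : 0 ≤ r) (hr1 : r < 1) (j n : ℕ) :
    ∑ k ∈ range n, r ^ Nat.dist j k ≤ (1 + r) / (1 - r) := by
  have geom_le (m : ℕ) : ∑ i ∈ range m, r ^ i ≤ (1 - r)⁻¹ :=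
    tsum_geometric_of_lt_one hr0 hr1 ▸
      (summable_geometric_of_lt_one hr0 hr1).sum_le_tsum _ fun i _ ↦ pow_nonneg hr0 i
  calc ∑ k ∈ range n, r ^ Nat.dist j k
      ≤ ∑ k ∈ range (j + 1 + n), r ^ Nat.dist j k :=
        sum_le_sum_of_subset_of_nonneg (range_mono (by lia)) fun _ _ _ ↦ pow_nonneg hr0 _
    _ = ∑ i ∈ range (j + 1), r ^ i + r * ∑ i ∈ range n, r ^ i := by
        rw [sum_range_add, ← sum_range_reflect, Finset.mul_sum]
        congr 1 <;> refine sum_congr rfl fun k hk ↦ ?_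
        · congr 1
          grind [Nat.dist]
        · rw [← pow_succ']
          congr 1
          grind [Nat.dist]
    _ ≤ (1 - r)⁻¹ + r * (1 - r)⁻¹ := by gcongr <;> exact geom_le _
    _ = (1 + r) / (1 - r) := by ring

lemma one_add_exp_neg_div_one_sub_exp_neg_le {x : ℝ} (hx : 0 < x) :
    (1 + rexp (-x)) / (1 - rexp (-x)) ≤ 1 + 2 / x := by
  have hexp : rexp (-x) * (x + 1) ≤ 1 := by
    calc rexp (-x) * (x + 1) ≤ rexp (-x) * rexp x := by gcongr; exact add_one_le_exp x
      _ = 1 := by rw [← Real.exp_add, neg_add_cancel, Real.exp_zero]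
  have hlt : 0 < 1 - rexp (-x) := by simpa using hx
  rw [div_le_iff₀ hlt]
  field_simp
  linarith

section GeometricCovariance

variable {Ω' : Type*} {mΩ' : MeasurableSpace Ω'} {P : Measure Ω'}

lemma variance_sum_range_sq_le_of_abs_covariance_le {Y : ℕ → Ω' → ℝ} {C r : ℝ}
    (hY : IsGaussianProcess Y P) (hY0 : ∀ k, P[Y k] = 0) (hr0 : 0 ≤ r) (hr1 : r < 1)
    (hcov : ∀ j k, |cov[Y j, Y k; P]| ≤ C * r ^ Nat.dist j k) (n : ℕ) :
    Var[fun ω ↦ ∑ k ∈ range n, Y k ω ^ 2; P] ≤ 2 * C ^ 2 * n * ((1 + r ^ 2) / (1 - r ^ 2)) := by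
  have hcov_sq (j k : ℕ) : cov[Y j, Y k; P] ^ 2 ≤ C ^ 2 * (r ^ 2) ^ Nat.dist j k := by
    calc cov[Y j, Y k; P] ^ 2 ≤ (C * r ^ Nat.dist j k) ^ 2 := sq_le_sq.2 <|
          (hcov j k).trans (le_abs_self _)
      _ = C ^ 2 * (r ^ 2) ^ Nat.dist j k := by ring
  calc Var[fun ω ↦ ∑ k ∈ range n, Y k ω ^ 2; P]
      = 2 * ∑ j ∈ range n, ∑ k ∈ range n, cov[Y j, Y k; P] ^ 2 :=
        variance_sum_sq_of_isGaussianProcess hY hY0 _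
    _ ≤ 2 * ∑ j ∈ range n, ∑ k ∈ range n, C ^ 2 * (r ^ 2) ^ Nat.dist j k := by
        gcongr with j _ k _
        exact hcov_sq j k
    _ ≤ 2 * ∑ _j ∈ range n, C ^ 2 * ((1 + r ^ 2) / (1 - r ^ 2)) := by
        simp only [← Finset.mul_sum]
        gcongr with j _
        exact sum_range_pow_natDist_le (sq_nonneg r) (pow_lt_one₀ hr0 hr1 two_ne_zero) j n
    _ = 2 * C ^ 2 * n * ((1 + r ^ 2) / (1 - r ^ 2)) := by
        rw [sum_const, card_range, nsmul_eq_mul]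
        ring

lemma variance_sum_range_sq_le_of_abs_covariance_le_exp {X : ℝ → Ω' → ℝ} {C θ Δ : ℝ}
    (hX : IsGaussianProcess (fun t : Set.Ici (0 : ℝ) ↦ X t) P) (hX0 : ∀ t, 0 ≤ t → P[X t] = 0)
    (hθ : 0 < θ) (hcov : ∀ s t, 0 ≤ s → 0 ≤ t → |cov[X s, X t; P]| ≤ C * rexp (-θ * |t - s|))
    (hΔ : 0 < Δ) (n : ℕ) :
    Var[fun ω ↦ ∑ k ∈ range n, X (k * Δ) ω ^ 2; P] ≤ 2 * C ^ 2 * n * (1 + 1 / (θ * Δ)) := by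
  have time_nonneg (k : ℕ) : 0 ≤ k * Δ := by positivity
  have exp_time_diff (j k : ℕ) : rexp (-θ * |k * Δ - j * Δ|) = rexp (-(θ * Δ)) ^ Nat.dist j k := by
    have hdist : |(k : ℝ) - j| = Nat.dist j k := by
      rcases le_total j k with h | h
      · rw [Nat.dist_eq_sub_of_le h, Nat.cast_sub h, abs_of_nonneg (by simpa using h)]
      · rw [Nat.dist_eq_sub_of_le_right h, Nat.cast_sub h, abs_of_nonpos (by simpa using h),
          neg_sub]
    rw [← sub_mul, abs_mul, abs_of_pos hΔ, hdist, ← Real.exp_nat_mul]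
    ring_nf
  have hsample : IsGaussianProcess (fun k : ℕ ↦ X (k * Δ)) P :=
    hX.comp_right fun k : ℕ ↦ ⟨k * Δ, time_nonneg k⟩
  calc Var[fun ω ↦ ∑ k ∈ range n, X (k * Δ) ω ^ 2; P]
      ≤ 2 * C ^ 2 * n * ((1 + rexp (-(θ * Δ)) ^ 2) / (1 - rexp (-(θ * Δ)) ^ 2)) :=
        variance_sum_range_sq_le_of_abs_covariance_le hsample (fun k ↦ hX0 _ (time_nonneg k))
          (Real.exp_nonneg _) (Real.exp_lt_one_iff.2 (neg_neg_of_pos (mul_pos hθ hΔ)))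
          (fun j k ↦ exp_time_diff j k ▸ hcov _ _ (time_nonneg j) (time_nonneg k)) n
    _ = 2 * C ^ 2 * n * ((1 + rexp (-(2 * (θ * Δ)))) / (1 - rexp (-(2 * (θ * Δ))))) := by
        rw [← Real.exp_nat_mul]
        ring_nf
    _ ≤ 2 * C ^ 2 * n * (1 + 2 / (2 * (θ * Δ))) := by
        gcongr
        exact one_add_exp_neg_div_one_sub_exp_neg_le (by positivity)
    _ = 2 * C ^ 2 * n * (1 + 1 / (θ * Δ)) := by
        rw [div_mul_cancel_left₀ two_ne_zero, one_div]

lemma integral_sq_const_mul_sum_sub_integral {ι : Type*} {Z : ι → Ω' → ℝ} {s : Finset ι}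
    (hZ : ∀ i ∈ s, Integrable (Z i) P) (a : ℝ) :
    ∫ ω, (a * ∑ i ∈ s, (Z i ω - ∫ ω', Z i ω' ∂P)) ^ 2 ∂P
      = a ^ 2 * Var[fun ω ↦ ∑ i ∈ s, Z i ω; P] := by
  rw [variance_eq_integral (integrable_finsetSum s hZ).aemeasurable, integral_finsetSum s hZ,
    ← integral_const_mul]
  simp only [mul_pow, sum_sub_distrib]

end GeometricCovariance

namespace IsOUPair

variable {θ : ℝ} {X : Fin 2 → ℝ → Ω → ℝ}

lemma isGaussianProcess (hX : IsOUPair θ X) (i : Fin 2) :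
    IsGaussianProcess (fun t : Set.Ici (0 : ℝ) ↦ X i t) ℙ := by
  refine isGaussianProcess_of_hasGaussianLaw_sum_mul fun I c ↦ ⟨?_⟩
  obtain ⟨v, hv⟩ := hX.gaussian i I.card (fun j ↦ (I.equivFin.symm j : Set.Ici (0 : ℝ)))
    (fun j ↦ c (I.equivFin.symm j)) fun j ↦ (I.equivFin.symm j : Set.Ici (0 : ℝ)).2
  have reindex (ω : Ω) : ∑ j, c (I.equivFin.symm j) * X i (I.equivFin.symm j : Set.Ici (0 : ℝ)) ω
      = ∑ t : I, c t * X i (t : Set.Ici (0 : ℝ)) ω :=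
    I.equivFin.symm.sum_comp fun t ↦ c t * X i (t : Set.Ici (0 : ℝ)) ω
  simp only [reindex] at hv
  rw [hv]
  infer_instance

lemma integral_eq_zero (hX : IsOUPair θ X) (i : Fin 2) {t : ℝ} (ht : 0 ≤ t) :
    ∫ ω, X i t ω = 0 := by
  obtain ⟨v, hv⟩ := hX.gaussian i 1 (fun _ ↦ t) (fun _ ↦ 1) fun _ ↦ ht
  simp only [Fin.sum_univ_one, one_mul] at hv
  calc ∫ ω, X i t ω = ∫ x, x ∂(Measure.map (X i t) ℙ) :=
        (integral_map (hX.meas i t).aemeasurable aestronglyMeasurable_id).symm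
    _ = 0 := by rw [hv, integral_id_gaussianReal]

lemma covariance_eq (hX : IsOUPair θ X) (i : Fin 2) {s t : ℝ} (hs : 0 ≤ s) (ht : 0 ≤ t) :
    cov[X i s, X i t; ℙ] = (rexp (-θ * |t - s|) - rexp (-θ * (t + s))) / (2 * θ) := by
  rw [← hX.cov i s t hs ht, covariance, hX.integral_eq_zero i hs, hX.integral_eq_zero i ht]
  simp only [sub_zero]

lemma abs_covariance_le (hX : IsOUPair θ X) (hθ : 0 < θ) (i : Fin 2) {s t : ℝ} (hs : 0 ≤ s)
    (ht : 0 ≤ t) : |cov[X i s, X i t; ℙ]| ≤ 1 / (2 * θ) * rexp (-θ * |t - s|) := by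
  have abs_sub_le : |t - s| ≤ t + s := abs_le.2 ⟨by linarith, by linarith⟩
  have exp_le : rexp (-θ * (t + s)) ≤ rexp (-θ * |t - s|) :=
    Real.exp_le_exp.2 (mul_le_mul_of_nonpos_left abs_sub_le (neg_nonpos.2 hθ.le))
  rw [hX.covariance_eq i hs ht, abs_of_nonneg (div_nonneg (sub_nonneg.2 exp_le) (by positivity)),
    one_div_mul_eq_div]
  gcongr
  exact sub_le_self _ (Real.exp_nonneg _)

end IsOUPair

theorem stmt_15_general {Ω' : Type*} {mΩ' : MeasurableSpace Ω'} {P : Measure Ω'}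
    {X : ℝ → Ω' → ℝ} {θ : ℝ} (hθ : 0 < θ)
    (hX : IsGaussianProcess (fun t : Set.Ici (0 : ℝ) ↦ X t) P) (hX0 : ∀ t, 0 ≤ t → P[X t] = 0)
    (hcov : ∀ s t, 0 ≤ s → 0 ≤ t → |cov[X s, X t; P]| ≤ 1 / (2 * θ) * rexp (-θ * |t - s|))
    {n : ℕ} (hn : 1 ≤ n) {Δ : ℝ} (hΔ : 0 < Δ) :
    ∫ ω, ((2 * θ / n) * ∑ k ∈ range n,
        (X (k * Δ) ω ^ 2 - ∫ ω', X (k * Δ) ω' ^ 2 ∂P)) ^ 2 ∂P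
      ≤ 2 / n * (1 + 1 / (θ * Δ)) := by
  have hn0 : (n : ℝ) ≠ 0 := by positivity
  have time_mem (k : ℕ) : k * Δ ∈ Set.Ici (0 : ℝ) := Set.mem_Ici.2 (by positivity)
  have integrable_sq (k : ℕ) : Integrable (fun ω ↦ X (k * Δ) ω ^ 2) P :=
    integrable_pow_of_hasGaussianLaw (hX.hasGaussianLaw_eval ⟨k * Δ, time_mem k⟩) 2
  calc ∫ ω, ((2 * θ / n) * ∑ k ∈ range n,
          (X (k * Δ) ω ^ 2 - ∫ ω', X (k * Δ) ω' ^ 2 ∂P)) ^ 2 ∂P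
      = (2 * θ / n) ^ 2 * Var[fun ω ↦ ∑ k ∈ range n, X (k * Δ) ω ^ 2; P] :=
        integral_sq_const_mul_sum_sub_integral (fun k _ ↦ integrable_sq k) _
    _ ≤ (2 * θ / n) ^ 2 * (2 * (1 / (2 * θ)) ^ 2 * n * (1 + 1 / (θ * Δ))) := by
        gcongr
        exact variance_sum_range_sq_le_of_abs_covariance_le_exp hX hX0 hθ hcov hΔ n
    _ = 2 / n * (1 + 1 / (θ * Δ)) := by
        field_simp

/-- there is `c(θ) > 0` such that for all `n ≥ 1` and meshes
`0 < Δₙ ≤ min(1, 1/(2θ))`, the centered quadratic sum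
`D_{1,n} = (2θ/n) Σ_{k<n} (X₁(kΔₙ)² − E[X₁(kΔₙ)²])` satisfies
`E[D_{1,n}²] ≤ c(θ)·(nΔₙ)^{−1}`. -/
theorem stmt_15 (θ : ℝ) (hθ : 0 < θ) [IsProbabilityMeasure (ℙ : Measure Ω)]
    (X : Fin 2 → ℝ → Ω → ℝ) (hX : IsOUPair θ X) :
    ∃ c : ℝ, 0 < c ∧ ∀ n : ℕ, 1 ≤ n → ∀ Δ : ℝ, 0 < Δ → Δ ≤ min 1 (1 / (2 * θ)) →
      ∫ ω, ((2 * θ / (n : ℝ))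
          * ∑ k ∈ Finset.range n,
              ((X 0 ((k : ℝ) * Δ) ω) ^ 2 - ∫ ω', (X 0 ((k : ℝ) * Δ) ω') ^ 2 ∂ℙ)) ^ 2 ∂ℙ
        ≤ c / ((n : ℝ) * Δ) := by
  refine ⟨3 / θ, by positivity, fun n hn Δ hΔ hmesh ↦ (stmt_15_general hθ (hX.isGaussianProcess 0)
    (fun _ ↦ hX.integral_eq_zero 0) (fun _ _ ↦ hX.abs_covariance_le hθ 0) hn hΔ).trans ?_⟩
  have hΔθ : Δ * (2 * θ) ≤ 1 := (le_div_iff₀ (by positivity)).1 (hmesh.trans (min_le_right _ _))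
  have hn0 : 0 < (n : ℝ) := by positivity
  field_simp
  linarith

end
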